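/- Commutator estimate: let k ≥ 1 be an integer and define the commutator [∇ᵏ, f]g = ∇ᵏ(fg) − f∇ᵏg. Then there exists a constant C > 0, depending only on k, such that for all Schwartz functions f, g on ℝ³ one has ‖[∇ᵏ, f]g‖_{L²} ≤ C‖∇f‖_{L^∞}‖∇^{k−1}g‖_{L²} + C‖∇ᵏf‖_{L²}‖g‖_{L^∞}. -/

import Mathlib

open MeasureTheory Real Filter
open scoped ENNReal Topology FourierTransform ComplexConjugate ContDiff

noncomputable section

/-- Three-dimensional Euclidean space `ℝ³`. -/
abbrev E3 : Type := EuclideanSpace ℝ (Fin 3)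

/-- The `i`-th partial derivative of a scalar field on `ℝ³`. -/
def pd (i : Fin 3) (f : E3 → ℝ) (x : E3) : ℝ :=
  fderiv ℝ f x (EuclideanSpace.single i 1)

/-- The divergence of a vector field on `ℝ³`. -/
def vdiv (u : E3 → E3) (x : E3) : ℝ :=
  ∑ i, fderiv ℝ u x (EuclideanSpace.single i 1) i

/-- The Laplacian of a scalar field on `ℝ³`. -/
def lap (f : E3 → ℝ) (x : E3) : ℝ :=
  ∑ i, pd i (pd i f) x

/-- The `L^p` norm (as a real number) of a function on `ℝ³`. -/
def LpN {F : Type*} [NormedAddCommGroup F] (p : ℝ≥0∞) (f : E3 → F) : ℝ :=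
  (eLpNorm f p volume).toReal

/-- `‖∇ᵏf‖_{L^p}`: the `L^p` norm of the `k`-th order spatial derivatives. -/
def DN {F : Type*} [NormedAddCommGroup F] [NormedSpace ℝ F] (p : ℝ≥0∞) (k : ℕ)
    (f : E3 → F) : ℝ :=
  (eLpNorm (iteratedFDeriv ℝ k f) p volume).toReal

/-- `‖∇ᵏf‖_{H^m}²`: the square of the Sobolev norm of the `k`-th order derivatives. -/
def SobSq {F : Type*} [NormedAddCommGroup F] [NormedSpace ℝ F] (k m : ℕ)
    (f : E3 → F) : ℝ :=
  ∑ j ∈ Finset.range (m + 1), (DN 2 (k + j) f) ^ 2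

/-- `‖∇ᵏf‖_{H^m}`: the Sobolev norm of the `k`-th order derivatives. -/
def SobN {F : Type*} [NormedAddCommGroup F] [NormedSpace ℝ F] (k m : ℕ)
    (f : E3 → F) : ℝ :=
  Real.sqrt (SobSq k m f)


open LineDeriv SchwartzMap

lemma hasDerivAt_phi (s : ℝ) (hs : 0 < s) (t : ℝ) :
    HasDerivAt (fun t : ℝ => |t| ^ s * t) ((s + 1) * |t| ^ s) t := by
  rcases eq_or_ne t 0 with rfl | ht
  · rw [hasDerivAt_iff_tendsto_slope]
    have h0 : (s + 1) * |(0:ℝ)| ^ s = |(0:ℝ)| ^ s := by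
      rw [abs_zero, Real.zero_rpow hs.ne']; simp
    rw [h0]
    have hc : Continuous (fun t : ℝ => |t| ^ s) :=
      continuous_abs.rpow_const (fun _ => Or.inr hs.le)
    refine ((hc.tendsto 0).mono_left nhdsWithin_le_nhds).congr' ?_
    filter_upwards [self_mem_nhdsWithin] with y hy
    have hy' : y ≠ 0 := hy
    simp [slope_def_field, hy']
  · have h1 : HasDerivAt (fun t : ℝ => |t| ^ s) (SignType.sign t * s * |t| ^ (s - 1)) t :=
      (hasDerivAt_abs ht).rpow_const (Or.inl (abs_ne_zero.2 ht))
    refine (h1.mul (hasDerivAt_id t)).congr_deriv ?_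
    have h2 : |t| ^ s = |t| ^ (s - 1) * |t| := by
      rw [← Real.rpow_add_one (abs_ne_zero.2 ht)]; simp
    have h3 : (SignType.sign t : ℝ) * t = |t| := sign_mul_self t
    change (SignType.sign t : ℝ) * s * |t| ^ (s - 1) * t + |t| ^ s * 1 = _
    rw [h2, ← h3]; ring

lemma gn_scalar (v w z : SchwartzMap E3 ℝ) (e : E3)
    (hw : w = ∂_{e} v) (hz : z = ∂_{e} w) (s : ℝ) (hs : 0 < s) (q r : ℝ≥0∞)
    [h : ENNReal.HolderTriple q r (ENNReal.ofReal ((s + 2) / 2))] :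
    eLpNorm w (ENNReal.ofReal (s + 2)) volume ^ 2 ≤
      ENNReal.ofReal (s + 1) * (eLpNorm v q volume * eLpNorm z r volume) := by
  have hws : Continuous (fun x => ‖w x‖ ^ s) :=
    w.continuous.norm.rpow_const (fun _ => Or.inr hs.le)
  have hwd : ∀ x, HasFDerivAt (fun x => |w x| ^ s * w x) (((s+1) * |w x| ^ s) • fderiv ℝ w x) x :=
    fun x => (hasDerivAt_phi s hs (w x)).comp_hasFDerivAt x w.differentiableAt.hasFDerivAt
  have hwe : ∀ x, fderiv ℝ (fun x => |w x| ^ s * w x) x e = (s+1) * |w x| ^ s * z x := by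
    intro x
    rw [(hwd x).fderiv]
    simp [hz, SchwartzMap.lineDerivOp_apply_eq_fderiv]
  have hbd : ∃ C, ∀ x, ‖|w x| ^ s‖ ≤ C := by
    obtain ⟨C, hC⟩ : ∃ C, ∀ x, ‖w x‖ ≤ C := ⟨_, fun x => SchwartzMap.norm_le_seminorm ℝ w x⟩
    refine ⟨C ^ s, fun x => ?_⟩
    rw [Real.norm_of_nonneg (by positivity)]
    exact Real.rpow_le_rpow (abs_nonneg _) (hC x) hs.le
  obtain ⟨C, hC⟩ := hbd
  have hint : ∀ a b : SchwartzMap E3 ℝ, Integrable (fun x => |w x| ^ s * (a x * b x)) volume := by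
    intro a b
    have : Integrable (fun x => a x * b x) volume := by
      have h2 := (a.memLp 2 volume).integrable_mul (b.memLp 2 volume)
      exact h2
    exact this.bdd_mul (c := C) hws.aestronglyMeasurable (Eventually.of_forall hC)
  have ibp := integral_mul_fderiv_eq_neg_fderiv_mul_of_integrable (μ := (volume : Measure E3))
    (f := v) (g := fun x => |w x| ^ s * w x) (v := e)
    ((hint w w).congr (Eventually.of_forall fun x => by
      simp only [← SchwartzMap.lineDerivOp_apply_eq_fderiv]; rw [← hw]; ring))
    (((hint v z).const_mul (s+1)).congr (Eventually.of_forall fun x => by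
      simp only [hwe]; ring))
    ((hint v w).congr (Eventually.of_forall fun x => by ring))
    (fun x _ => v.differentiableAt) (fun x _ => (hwd x).differentiableAt)
  have e1 : eLpNorm w (ENNReal.ofReal (s+2)) volume ^ (s+2) =
      ENNReal.ofReal (∫ x, fderiv ℝ v x e * (|w x| ^ s * w x)) := by
    have h1 := eLpNorm_norm_rpow (p := 1) (μ := (volume : Measure E3)) (⇑w) (q := s + 2) (by linarith)
    rw [one_mul] at h1
    rw [← h1]
    have h2 : (fun x => ‖w x‖ ^ (s+2)) = fun x => |w x| ^ s * (w x * w x) := by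
      funext x
      rcases eq_or_ne (w x) 0 with h0 | h0
      · rw [h0]; simp [Real.zero_rpow (show s + 2 ≠ 0 by linarith)]
      · rw [Real.norm_eq_abs, Real.rpow_add (abs_pos.2 h0)]
        congr 1
        rw [Real.rpow_two, sq_abs]; ring
    rw [h2, eLpNorm_one_eq_lintegral_enorm, ← ofReal_integral_norm_eq_lintegral_enorm (hint w w)]
    congr 1
    refine integral_congr_ae (Eventually.of_forall fun x => ?_)
    simp only
    rw [Real.norm_of_nonneg (mul_nonneg (by positivity) (mul_self_nonneg _)),
      ← SchwartzMap.lineDerivOp_apply_eq_fderiv, ← hw]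
    ring
  have e2 : ENNReal.ofReal (∫ x, fderiv ℝ v x e * (|w x| ^ s * w x)) ≤
      eLpNorm (fun x => (s+1) * (|w x| ^ s * (v x * z x))) 1 volume := by
    have h1 : ∫ x, fderiv ℝ v x e * (|w x| ^ s * w x) = - ∫ x, (s+1) * (|w x| ^ s * (v x * z x)) := by
      rw [← neg_eq_iff_eq_neg, ← ibp]
      refine integral_congr_ae (Eventually.of_forall fun x => ?_)
      simp only [hwe]; ring
    rw [h1, eLpNorm_one_eq_lintegral_enorm]
    refine le_trans ?_ (enorm_integral_le_lintegral_enorm _)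
    rw [← ofReal_norm]
    exact ENNReal.ofReal_le_ofReal (by rw [Real.norm_eq_abs]; exact neg_le_abs _)
  have e3 : eLpNorm (fun x => (s+1) * (|w x| ^ s * (v x * z x))) 1 volume ≤
      ENNReal.ofReal (s+1) * (eLpNorm w (ENNReal.ofReal (s+2)) volume ^ s *
        (eLpNorm v q volume * eLpNorm z r volume)) := by
    have h1 := eLpNorm_const_smul_le (μ := (volume : Measure E3)) (p := 1) (c := s + 1)
      (f := fun x => |w x| ^ s * (v x * z x))
    refine h1.trans ?_
    rw [← ofReal_norm, Real.norm_of_nonneg (by linarith : 0 ≤ s + 1)]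
    gcongr
    have hp : ENNReal.HolderTriple (ENNReal.ofReal ((s+2)/s)) (ENNReal.ofReal ((s + 2) / 2)) 1 := by
      constructor
      rw [← ENNReal.ofReal_inv_of_pos (by positivity), ← ENNReal.ofReal_inv_of_pos (by positivity),
        ← ENNReal.ofReal_add (by positivity) (by positivity)]
      rw [inv_one, ← ENNReal.ofReal_one]
      congr 1
      field_simp
    have h2 := eLpNorm_smul_le_mul_eLpNorm (μ := (volume : Measure E3)) (p := ENNReal.ofReal ((s+2)/s))
      (q := ENNReal.ofReal ((s + 2) / 2)) (r := 1) (φ := fun x => ‖w x‖ ^ s)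
      (f := fun x => v x * z x) (v.continuous.mul z.continuous).aestronglyMeasurable
      hws.aestronglyMeasurable
    refine h2.trans ?_
    rw [eLpNorm_norm_rpow _ hs, ← ENNReal.ofReal_mul (by positivity),
      div_mul_cancel₀ _ hs.ne']
    gcongr
    exact eLpNorm_smul_le_mul_eLpNorm (μ := (volume : Measure E3)) (p := q)
      (q := r) (φ := ⇑v) (f := ⇑z) z.continuous.aestronglyMeasurable
      v.continuous.aestronglyMeasurable
  have e4 := e1.le.trans (e2.trans e3)
  set X := eLpNorm w (ENNReal.ofReal (s+2)) volume with hX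
  have hXt : X ≠ ⊤ := (w.memLp _ volume).eLpNorm_ne_top
  rcases eq_or_ne X 0 with h0 | h0
  · rw [h0]; simp
  rw [ENNReal.rpow_add _ _ h0 hXt, mul_left_comm] at e4
  have := (ENNReal.mul_le_mul_iff_right (by simp [h0, hXt]) (ENNReal.rpow_ne_top_of_nonneg hs.le hXt)).1 e4
  simpa using this

lemma opNorm_le_sum {n : ℕ} (A : ContinuousMultilinearMap ℝ (fun _ : Fin n => E3) ℝ) :
    ‖A‖ ≤ ∑ L : Fin n → Fin 3, |A (fun j => EuclideanSpace.single (L j) (1:ℝ))| := by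
  refine ContinuousMultilinearMap.opNorm_le_bound (Finset.sum_nonneg fun _ _ => abs_nonneg _) ?_
  intro m
  have hm : m = fun j => ∑ i : Fin 3, (m j i) • EuclideanSpace.single i (1:ℝ) := by
    funext j
    ext l
    simp [Finset.sum_apply, Pi.single_apply]
  have h1 : A m = ∑ L : Fin n → Fin 3, (∏ j, m j (L j)) •
      A (fun j => EuclideanSpace.single (L j) (1:ℝ)) := by
    conv_lhs => rw [hm]
    rw [ContinuousMultilinearMap.map_sum]
    refine Finset.sum_congr rfl fun L _ => ?_
    exact A.map_smul_univ _ _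
  rw [h1, Finset.sum_mul]
  refine (norm_sum_le _ _).trans (Finset.sum_le_sum fun L _ => ?_)
  rw [norm_smul, mul_comm, Real.norm_eq_abs]
  gcongr
  rw [norm_prod]
  exact Finset.prod_le_prod (fun _ _ => norm_nonneg _) fun j _ => PiLp.norm_apply_le (m j) (L j)

lemma cont_iter (h : SchwartzMap E3 ℝ) (n : ℕ) : Continuous (iteratedFDeriv ℝ n h) :=
  (h.smooth n).continuous_iteratedFDeriv le_rfl

lemma memLp_iter (h : SchwartzMap E3 ℝ) (n : ℕ) (p : ℝ≥0∞) :
    MemLp (iteratedFDeriv ℝ n h) p volume := by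
  have h1 : MemLp (fun x => ∑ L : Fin n → Fin 3,
      ‖(∂^{fun j => EuclideanSpace.single (L j) (1:ℝ)} h : SchwartzMap E3 ℝ) x‖) p volume :=
    memLp_finsetSum _ fun L _ => (SchwartzMap.memLp _ p volume).norm
  refine h1.mono' (cont_iter h n).aestronglyMeasurable (Eventually.of_forall fun x => ?_)
  refine (opNorm_le_sum _).trans (le_of_eq ?_)
  simp only [SchwartzMap.iteratedLineDerivOp_eq_iteratedFDeriv, Real.norm_eq_abs]

lemma comp_le (h : SchwartzMap E3 ℝ) (n : ℕ) (p : ℝ≥0∞) (L : Fin n → Fin 3) :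
    (eLpNorm (⇑(∂^{fun j => EuclideanSpace.single (L j) (1:ℝ)} h : SchwartzMap E3 ℝ)) p volume).toReal
      ≤ DN p n h := by
  unfold DN
  refine ENNReal.toReal_mono (memLp_iter h n p).eLpNorm_ne_top (eLpNorm_mono fun x => ?_)
  rw [SchwartzMap.iteratedLineDerivOp_eq_iteratedFDeriv]
  refine (ContinuousMultilinearMap.le_opNorm _ _).trans ?_
  simp

lemma le_comp (h : SchwartzMap E3 ℝ) (n : ℕ) (p : ℝ≥0∞) (hp : 1 ≤ p) :
    DN p n h ≤ ∑ L : Fin n → Fin 3,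
      (eLpNorm (⇑(∂^{fun j => EuclideanSpace.single (L j) (1:ℝ)} h : SchwartzMap E3 ℝ)) p volume).toReal := by
  unfold DN
  rw [← ENNReal.toReal_sum fun L _ => (SchwartzMap.memLp _ p volume).eLpNorm_ne_top]
  refine ENNReal.toReal_mono (ENNReal.sum_ne_top.2 fun L _ =>
    (SchwartzMap.memLp _ p volume).eLpNorm_ne_top) ?_
  have h1 : eLpNorm (iteratedFDeriv ℝ n h) p volume ≤ eLpNorm (∑ L : Fin n → Fin 3, fun x =>
      ‖(∂^{fun j => EuclideanSpace.single (L j) (1:ℝ)} h : SchwartzMap E3 ℝ) x‖) p volume := by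
    refine eLpNorm_mono_real fun x => ?_
    refine (opNorm_le_sum _).trans (le_of_eq ?_)
    simp only [SchwartzMap.iteratedLineDerivOp_eq_iteratedFDeriv, Real.norm_eq_abs,
      Finset.sum_apply]
  refine h1.trans ((eLpNorm_sum_le (fun L _ =>
    (SchwartzMap.continuous _).norm.aestronglyMeasurable) hp).trans (le_of_eq ?_))
  exact Finset.sum_congr rfl fun L _ => eLpNorm_norm _

lemma DN_nonneg (p : ℝ≥0∞) (n : ℕ) (h : E3 → ℝ) : 0 ≤ DN p n h := ENNReal.toReal_nonneg

lemma gn_tensor (h : SchwartzMap E3 ℝ) (n : ℕ) (s : ℝ) (hs : 0 < s) (q r : ℝ≥0∞)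
    [ENNReal.HolderTriple q r (ENNReal.ofReal ((s + 2) / 2))] :
    DN (ENNReal.ofReal (s + 2)) (n + 1) h ^ 2 ≤
      9 ^ (n + 1) * (s + 1) * (DN q n h * DN r (n + 2) h) := by
  set M := (s + 1) * (DN q n h * DN r (n + 2) h) with hM
  have hM0 : 0 ≤ M := mul_nonneg (by linarith) (mul_nonneg (DN_nonneg _ _ _) (DN_nonneg _ _ _))
  have key : ∀ L : Fin (n+1) → Fin 3,
      (eLpNorm (⇑(∂^{fun j => EuclideanSpace.single (L j) (1:ℝ)} h : SchwartzMap E3 ℝ))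
        (ENNReal.ofReal (s + 2)) volume).toReal ≤ √M := by
    intro L
    refine Real.le_sqrt_of_sq_le ?_
    have a1 := comp_le h n q (Fin.tail L)
    have a2 := comp_le h (n+2) r (Fin.cons (L 0) L)
    set v : SchwartzMap E3 ℝ := ∂^{fun j => EuclideanSpace.single (Fin.tail L j) (1:ℝ)} h with hv
    set w : SchwartzMap E3 ℝ := ∂^{fun j => EuclideanSpace.single (L j) (1:ℝ)} h with hw
    set z : SchwartzMap E3 ℝ := ∂^{fun j => EuclideanSpace.single
      ((Fin.cons (L 0) L : Fin (n+2) → Fin 3) j) (1:ℝ)} h with hz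
    have hw' : w = ∂_{EuclideanSpace.single (L 0) (1:ℝ)} v := by
      rw [hw, iteratedLineDerivOp_succ_left]; rfl
    have hz' : z = ∂_{EuclideanSpace.single (L 0) (1:ℝ)} w := by
      rw [hz, iteratedLineDerivOp_succ_left]; rfl
    have g := gn_scalar v w z _ hw' hz' s hs q r
    have g2 := ENNReal.toReal_mono (ENNReal.mul_ne_top ENNReal.ofReal_ne_top (ENNReal.mul_ne_top
      (v.memLp q volume).eLpNorm_ne_top (z.memLp r volume).eLpNorm_ne_top)) g
    rw [ENNReal.toReal_pow, ENNReal.toReal_mul, ENNReal.toReal_mul,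
      ENNReal.toReal_ofReal (by linarith)] at g2
    refine g2.trans ?_
    rw [hM]
    gcongr
    exact DN_nonneg _ _ _
  have h1 := (le_comp h (n+1) (ENNReal.ofReal (s+2)) (by
    rw [← ENNReal.ofReal_one]; exact ENNReal.ofReal_le_ofReal (by linarith))).trans
    (Finset.sum_le_sum fun L _ => key L)
  rw [Finset.sum_const, Finset.card_univ, Fintype.card_fun, Fintype.card_fin, Fintype.card_fin,
    nsmul_eq_mul] at h1
  calc _ ≤ (((3 ^ (n+1) : ℕ) : ℝ) * √M) ^ 2 := by
        gcongr
        exact DN_nonneg _ _ _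
    _ = _ := by
        rw [mul_pow, Real.sq_sqrt hM0, hM]
        push_cast
        rw [← pow_mul, mul_comm (n+1) 2, pow_mul]
        norm_num
        ring

lemma seq_max (m : ℕ) (b : ℕ → ℝ) (hb : ∀ i, 0 ≤ b i)
    (h : ∀ i, i + 1 < m → b (i + 1) ^ 2 ≤ b i * b (i + 2)) :
    ∀ i ≤ m, b i ≤ b 0 + b m := by
  have hex : ∃ i, i ≤ m ∧ ∀ l ≤ m, b l ≤ b i := by
    obtain ⟨i, hi, hi'⟩ := Finset.exists_max_image (Finset.range (m+1)) b ⟨0, by simp⟩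
    exact ⟨i, by simpa [Nat.lt_succ_iff] using hi, fun l hl => hi' l (by simp; omega)⟩
  classical
  obtain ⟨h1, h2⟩ := Nat.find_spec hex
  set j := Nat.find hex with hj
  have hmin : ∀ l < j, ¬ (l ≤ m ∧ ∀ l' ≤ m, b l' ≤ b l) := fun l hl => Nat.find_min hex hl
  intro i hi
  refine (h2 i hi).trans ?_
  rcases Nat.eq_zero_or_pos j with h0 | h0
  · rw [h0]; linarith [hb m]
  rcases eq_or_lt_of_le h1 with h3 | h3
  · rw [h3]; linarith [hb 0]
  obtain ⟨l, hl⟩ : ∃ l, j = l + 1 := ⟨j - 1, by omega⟩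
  have h4 := h l (by omega)
  rw [← hl] at h4
  have h5 : b (l + 2) ≤ b j := h2 _ (by omega)
  rcases (hb j).eq_or_lt with h6 | h6
  · rw [← h6]; linarith [hb 0, hb m]
  have h7 : b j ≤ b l := by
    have : b j * b j ≤ b l * b j := by
      have := mul_le_mul_of_nonneg_left h5 (hb l)
      nlinarith
    exact le_of_mul_le_mul_right this h6
  exact absurd ⟨by omega, fun l' hl' => (h2 l' hl').trans h7⟩ (hmin l (by omega))

def PP (m i : ℕ) : ℝ≥0∞ := (ENNReal.ofReal ((i : ℝ) / (2 * m)))⁻¹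

lemma PP_zero (m : ℕ) : PP m 0 = ⊤ := by simp [PP]

lemma PP_self (m : ℕ) (hm : 0 < m) : PP m m = 2 := by
  have h : (m : ℝ) / (2 * m) = 2⁻¹ := by
    have : (m : ℝ) ≠ 0 := by positivity
    field_simp
  rw [PP, h, ENNReal.ofReal_inv_of_pos (by norm_num), inv_inv]
  simp

lemma gn_idx (h : SchwartzMap E3 ℝ) (m t i : ℕ) (hi : i + 1 < m) :
    DN (PP m (i + 1)) (i + 1 + t) h ^ 2 ≤
      (9 ^ (m + t) * (2 * m)) * (DN (PP m i) (i + t) h * DN (PP m (i + 2)) (i + 2 + t) h) := by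
  have hi' : ((i : ℝ) + 1) < m := by exact_mod_cast hi
  have hi0 : (0 : ℝ) ≤ i := by positivity
  set s : ℝ := 2 * m / (i + 1) - 2 with hs
  have hs0 : 0 < s := by
    rw [hs, sub_pos, lt_div_iff₀ (by positivity)]
    linarith
  have hs2 : s + 2 = 2 * m / (i + 1) := by rw [hs]; ring
  have hm0 : (0 : ℝ) < m := by linarith
  have hP : PP m (i + 1) = ENNReal.ofReal (s + 2) := by
    rw [PP, hs2, ← ENNReal.ofReal_inv_of_pos (by push_cast; positivity), inv_div]
    push_cast; rfl
  have hH : ENNReal.HolderTriple (PP m i) (PP m (i + 2)) (ENNReal.ofReal ((s + 2) / 2)) := by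
    constructor
    rw [PP, PP, inv_inv, inv_inv, ← ENNReal.ofReal_add (by positivity) (by positivity),
      ← ENNReal.ofReal_inv_of_pos (by linarith), hs2]
    congr 1
    push_cast
    field_simp
    ring
  have g := gn_tensor h (i + t) s hs0 (PP m i) (PP m (i + 2))
  rw [hP, show i + 1 + t = i + t + 1 by ring, show i + 2 + t = i + t + 2 by ring]
  refine g.trans ?_
  have hs3 : s + 1 ≤ 2 * m := by
    have : 2 * (m : ℝ) / (i + 1) ≤ 2 * m := div_le_self (by positivity) (by linarith)
    linarith
  have := mul_nonneg (DN_nonneg (PP m i) (i + t) h) (DN_nonneg (PP m (i + 2)) (i + t + 2) h)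
  have h9 : (9 : ℝ) ^ (i + t + 1) ≤ 9 ^ (m + t) := pow_le_pow_right₀ (by norm_num) (by omega)
  gcongr

lemma prod_bound (m : ℕ) (f g : SchwartzMap E3 ℝ) (i : ℕ) (hi : i ≤ m) :
    DN (PP m i) (i + 1) f * DN (PP m (m - i)) (m - i) g ≤
      ((9 ^ (m + 1) * (2 * m)) * (9 ^ m * (2 * m)) + 1) ^ (m ^ 2) *
      (DN (PP m 0) 1 f * DN (PP m m) m g + DN (PP m m) (m + 1) f * DN (PP m 0) 0 g) := by
  set K : ℝ := (9 ^ (m + 1) * (2 * m)) * (9 ^ m * (2 * m)) + 1 with hK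
  have hK1 : 1 ≤ K := by rw [hK]; simp only [le_add_iff_nonneg_left]; positivity
  set c : ℕ → ℝ := fun i => DN (PP m i) (i + 1) f * DN (PP m (m - i)) (m - i) g with hc
  have hc0 : ∀ i, 0 ≤ c i := fun i => mul_nonneg (DN_nonneg _ _ _) (DN_nonneg _ _ _)
  have hcc : ∀ i, i + 1 < m → c (i + 1) ^ 2 ≤ K * (c i * c (i + 2)) := by
    intro i hi
    have g1 := gn_idx f m 1 i hi
    have g2 := gn_idx g m 0 (m - (i + 2)) (by omega)
    simp only [add_zero] at g2
    rw [show m - (i + 2) + 1 = m - (i + 1) by omega, show m - (i + 2) + 2 = m - i by omega] at g2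
    have g3 := mul_le_mul g1 g2 (by positivity) (by
      have := mul_nonneg (DN_nonneg (PP m i) (i + 1) f) (DN_nonneg (PP m (i + 2)) (i + 2 + 1) f)
      positivity)
    calc c (i + 1) ^ 2 = _ := by rw [hc]; exact mul_pow _ _ _
      _ ≤ _ := g3
      _ = ((9 ^ (m + 1) * (2 * m)) * (9 ^ m * (2 * m))) * (c i * c (i + 2)) := by rw [hc]; ring
      _ ≤ _ := by
        have := mul_nonneg (hc0 i) (hc0 (i + 2))
        rw [hK]; nlinarith
  have hb := seq_max m (fun i => K ^ (i ^ 2) * c i) (fun i => mul_nonneg (by positivity) (hc0 i)) (by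
    intro i hi
    have := mul_nonneg (hc0 i) (hc0 (i + 2))
    calc (K ^ ((i + 1) ^ 2) * c (i + 1)) ^ 2 = (K ^ ((i + 1) ^ 2)) ^ 2 * c (i + 1) ^ 2 := by ring
      _ ≤ (K ^ ((i + 1) ^ 2)) ^ 2 * (K * (c i * c (i + 2))) := by gcongr; exact hcc i hi
      _ = K ^ ((i + 1) ^ 2 * 2 + 1) * (c i * c (i + 2)) := by rw [← pow_mul, pow_succ]; ring
      _ ≤ K ^ (i ^ 2 + (i + 2) ^ 2) * (c i * c (i + 2)) := by
        exact mul_le_mul_of_nonneg_right (pow_le_pow_right₀ hK1 (by nlinarith)) this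
      _ = _ := by rw [pow_add]; ring) i hi
  have hA : c i ≤ K ^ (i ^ 2) * c i := le_mul_of_one_le_left (hc0 i) (one_le_pow₀ hK1)
  refine (hA.trans hb).trans ?_
  have e0 : c 0 = DN (PP m 0) 1 f * DN (PP m m) m g := by simp [hc]
  have em : c m = DN (PP m m) (m + 1) f * DN (PP m 0) 0 g := by simp [hc]
  rw [← e0, ← em, mul_add]
  have : K ^ (0 ^ 2) * c 0 ≤ K ^ (m ^ 2) * c 0 := by
    exact mul_le_mul_of_nonneg_right (pow_le_pow_right₀ hK1 (by simp)) (hc0 0)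
  linarith

lemma holder_term (f g : SchwartzMap E3 ℝ) (a b : ℕ) (p q : ℝ≥0∞)
    [ENNReal.HolderTriple p q 2] :
    eLpNorm (fun x => ‖iteratedFDeriv ℝ a f x‖ * ‖iteratedFDeriv ℝ b g x‖) 2 volume ≤
      ENNReal.ofReal (DN p a f * DN q b g) := by
  have h1 := eLpNorm_smul_le_mul_eLpNorm (μ := (volume : Measure E3)) (p := p) (q := q) (r := 2)
    (φ := fun x => ‖iteratedFDeriv ℝ a f x‖) (f := fun x => ‖iteratedFDeriv ℝ b g x‖)
    (cont_iter g b).norm.aestronglyMeasurable (cont_iter f a).norm.aestronglyMeasurable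
  rw [eLpNorm_norm, eLpNorm_norm] at h1
  refine h1.trans ?_
  rw [DN, DN, ENNReal.ofReal_mul ENNReal.toReal_nonneg,
    ENNReal.ofReal_toReal (memLp_iter f a p).eLpNorm_ne_top,
    ENNReal.ofReal_toReal (memLp_iter g b q).eLpNorm_ne_top]

lemma term_bound (m : ℕ) : ∃ K : ℝ, 0 < K ∧ ∀ (f g : SchwartzMap E3 ℝ) (i : ℕ), i ≤ m →
    eLpNorm (fun x => ‖iteratedFDeriv ℝ (i + 1) f x‖ * ‖iteratedFDeriv ℝ (m - i) g x‖) 2 volume ≤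
      ENNReal.ofReal (K * (DN ⊤ 1 f * DN 2 m g + DN 2 (m + 1) f * DN ⊤ 0 g)) := by
  rcases Nat.eq_zero_or_pos m with rfl | hm
  · refine ⟨1, one_pos, fun f g i hi => ?_⟩
    obtain rfl : i = 0 := by omega
    refine (holder_term f g 1 0 ⊤ 2).trans (ENNReal.ofReal_le_ofReal ?_)
    have := mul_nonneg (DN_nonneg 2 1 f) (DN_nonneg ⊤ 0 g)
    simp only [zero_add]
    linarith
  · refine ⟨((9 ^ (m + 1) * (2 * m)) * (9 ^ m * (2 * m)) + 1) ^ (m ^ 2), by positivity,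
      fun f g i hi => ?_⟩
    have hm' : (0 : ℝ) < m := by exact_mod_cast hm
    have hH : ENNReal.HolderTriple (PP m i) (PP m (m - i)) 2 := by
      constructor
      rw [PP, PP, inv_inv, inv_inv, ← ENNReal.ofReal_add (by positivity) (by positivity),
        Nat.cast_sub hi, ← add_div, add_sub_cancel]
      have h := PP_self m hm
      rw [PP] at h
      rw [← h, inv_inv]
    refine (holder_term f g (i + 1) (m - i) (PP m i) (PP m (m - i))).trans
      (ENNReal.ofReal_le_ofReal ?_)
    have := prod_bound m f g i hi
    rwa [PP_self m hm, PP_zero] at this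

lemma comm_pointwise (f g : SchwartzMap E3 ℝ) (m : ℕ) (x : E3) :
    ‖iteratedFDeriv ℝ (m + 1) (fun y => f y * g y) x - f x • iteratedFDeriv ℝ (m + 1) (⇑g) x‖ ≤
      ∑ i ∈ Finset.range (m + 1), ((m + 1).choose (i + 1) : ℝ) *
        (‖iteratedFDeriv ℝ (i + 1) f x‖ * ‖iteratedFDeriv ℝ (m - i) g x‖) := by
  set c := f x with hc
  have hf : ContDiff ℝ (m + 1 : ℕ) f := f.smooth _
  have hg : ContDiff ℝ (m + 1 : ℕ) g := g.smooth _
  have hF : ContDiff ℝ (m + 1 : ℕ) (fun y => f y - c) := hf.sub contDiff_const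
  have h1 := norm_iteratedFDeriv_mul_le hF hg x (n := m + 1) le_rfl
  have h2 : iteratedFDeriv ℝ (m + 1) (fun y => (f y - c) * g y) x =
      iteratedFDeriv ℝ (m + 1) (fun y => f y * g y) x - c • iteratedFDeriv ℝ (m + 1) (⇑g) x := by
    have e : (fun y => (f y - c) * g y) = (fun y => f y * g y) - (c • ⇑g) := by
      funext y; simp [sub_mul]
    rw [e, iteratedFDeriv_sub_apply (f := fun y => f y * g y) (g := c • ⇑g)
      (hf.mul hg).contDiffAt (hg.const_smul c).contDiffAt,
      iteratedFDeriv_const_smul_apply hg.contDiffAt]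
  rw [h2] at h1
  refine h1.trans ?_
  rw [Finset.sum_range_succ']
  have h0 : ‖iteratedFDeriv ℝ 0 (fun y => f y - c) x‖ = 0 := by
    rw [norm_iteratedFDeriv_zero]; simp [hc]
  rw [h0]
  simp only [mul_zero, zero_mul, add_zero]
  refine Finset.sum_le_sum fun i hi => ?_
  have h3 : iteratedFDeriv ℝ (i + 1) (fun y => f y - c) x = iteratedFDeriv ℝ (i + 1) f x := by
    have e : (fun y => f y - c) = ⇑f - (fun _ => c) := rfl
    rw [e, iteratedFDeriv_sub_apply (f.smooth _).contDiffAt contDiff_const.contDiffAt,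
      iteratedFDeriv_const_of_ne (by omega)]
    simp
  rw [h3, mul_assoc, Nat.add_sub_add_right]

/-- **Commutator estimate.** For `k ≥ 1` there is `C > 0`, depending only on `k`,
such that for all Schwartz functions `f, g` on `ℝ³`,
`‖[∇ᵏ, f]g‖_{L²} ≤ C‖∇f‖_{L^∞}‖∇^{k−1}g‖_{L²} + C‖∇ᵏf‖_{L²}‖g‖_{L^∞}`, where
`[∇ᵏ, f]g = ∇ᵏ(fg) − f∇ᵏg`. -/
theorem commutator_estimate (k : ℕ) (hk : 1 ≤ k) :
    ∃ C > (0 : ℝ), ∀ f g : SchwartzMap E3 ℝ,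
      (eLpNorm (fun x : E3 =>
          iteratedFDeriv ℝ k (fun y => f y * g y) x - f x • iteratedFDeriv ℝ k (⇑g) x)
        2 volume).toReal ≤
        C * DN ⊤ 1 (⇑f) * DN 2 (k - 1) (⇑g) + C * DN 2 k (⇑f) * LpN ⊤ (⇑g) := by
  obtain ⟨m, rfl⟩ : ∃ m, k = m + 1 := ⟨k - 1, by omega⟩
  obtain ⟨K, hK, hT⟩ := term_bound m
  refine ⟨(∑ i ∈ Finset.range (m + 1), ((m + 1).choose (i + 1) : ℝ)) * K, ?_, fun f g => ?_⟩
  · refine mul_pos (Finset.sum_pos (fun i hi => ?_) ⟨0, by simp⟩) hK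
    have : i < m + 1 := by simpa using hi
    exact_mod_cast Nat.choose_pos (by omega)
  have hg0 : DN ⊤ 0 g = LpN ⊤ g := by
    unfold DN LpN
    congr 1
    refine eLpNorm_congr_norm_ae (Eventually.of_forall fun x => ?_)
    exact norm_iteratedFDeriv_zero
  rw [Nat.add_sub_cancel, ← hg0]
  set R := DN ⊤ 1 f * DN 2 m g + DN 2 (m + 1) f * DN ⊤ 0 g with hR
  have hR0 : 0 ≤ R := add_nonneg (mul_nonneg (DN_nonneg _ _ _) (DN_nonneg _ _ _))
    (mul_nonneg (DN_nonneg _ _ _) (DN_nonneg _ _ _))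
  have h1 : eLpNorm (fun x : E3 =>
          iteratedFDeriv ℝ (m + 1) (fun y => f y * g y) x - f x • iteratedFDeriv ℝ (m + 1) (⇑g) x)
        2 volume ≤ ENNReal.ofReal
          (∑ i ∈ Finset.range (m + 1), ((m + 1).choose (i + 1) : ℝ) * (K * R)) := by
    rw [ENNReal.ofReal_sum_of_nonneg (fun i _ => by positivity)]
    refine (eLpNorm_mono_real (g := ∑ i ∈ Finset.range (m + 1), fun x =>
      ((m + 1).choose (i + 1) : ℝ) *
        (‖iteratedFDeriv ℝ (i + 1) f x‖ * ‖iteratedFDeriv ℝ (m - i) g x‖)) (fun x => ?_)).trans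
      ((eLpNorm_sum_le (fun i _ => ?_) one_le_two).trans (Finset.sum_le_sum fun i hi => ?_))
    · rw [Finset.sum_apply]
      exact comm_pointwise f g m x
    · exact (continuous_const.mul ((cont_iter f _).norm.mul
        (cont_iter g _).norm)).aestronglyMeasurable
    · have hi' : i ≤ m := by
        have : i < m + 1 := by simpa using hi
        omega
      refine (eLpNorm_const_smul_le (μ := (volume : Measure E3)) (p := 2)
        (c := ((m + 1).choose (i + 1) : ℝ))
        (f := fun x => ‖iteratedFDeriv ℝ (i + 1) f x‖ * ‖iteratedFDeriv ℝ (m - i) g x‖)).trans ?_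
      rw [← ofReal_norm, Real.norm_of_nonneg (by positivity), ENNReal.ofReal_mul (by positivity)]
      gcongr
      exact hT f g i hi'
  refine (ENNReal.toReal_mono ENNReal.ofReal_ne_top h1).trans ?_
  rw [ENNReal.toReal_ofReal (Finset.sum_nonneg fun i _ => by positivity), ← Finset.sum_mul, hR]
  exact le_of_eq (by ring)
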